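/- Let (μ,K) ∈ ℚ_{>0} × ℕ* with K ∈ μℕ*, λ ∈ ℂ*, let f be meromorphic on a punctured neighborhood of 0 in ℂ* and f̂ = Σ_{i∈ℕ} f̂_i z^i ∈ ℂ[[z]] with f ∼^{[λ]}_{μ,K} f̂. Let (μ₁,K₁) ∈ ℚ_{>0} × ℕ* with K₁ ∈ μ₁ℕ* and K/K₁ ∈ ℕ*, and assume f ∈ ℍ^{[λ]}_{μ₁,K₁}. Then L^{[λ]}_{μ₁,K₁}(f) ∼^{[λ]}_{μ₂,K₁} L̂_{μ₁}(f̂), where μ₂ ∈ ℚ_{>0} is defined by μ₂^{−1} := μ^{−1} + μ₁^{−1}. -/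

import Mathlib

/-- The Jacobi theta function `Θ_q(z) = ∑_{ℓ ∈ ℤ} q^{-ℓ(ℓ+1)/2} z^ℓ`. -/
noncomputable def theta (q z : ℂ) : ℂ := ∑' ℓ : ℤ, q ^ (-(ℓ * (ℓ + 1) / 2)) * z ^ ℓ

/-- The real theta function `Θ_Q(x) = ∑_{ℓ ∈ ℤ} Q^{-ℓ(ℓ+1)/2} x^ℓ` for real `Q, x`;
for `Q > 1` and `x > 0` it is a positive real number. -/
noncomputable def thetaR (Q x : ℝ) : ℝ := ∑' ℓ : ℤ, Q ^ (-(ℓ * (ℓ + 1) / 2)) * x ^ ℓ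

/-- Rational powers `q^α := exp(α log q)` of a complex number, via the principal logarithm. -/
noncomputable def qpow (q : ℂ) (α : ℚ) : ℂ := Complex.exp ((α : ℂ) * Complex.log q)

/-- Rational (real) powers `b^α` for a real base. -/
noncomputable def qpowR (b : ℝ) (α : ℚ) : ℝ := b ^ (α : ℝ)

/-- The `ε`-neighborhood of the discrete `q^{1/K}`-spiral `λ q^{K⁻¹ℤ}` in `ℂ*`:
`∪_{ℓ∈K⁻¹ℤ} {z ∈ ℂ* : |z - q^ℓ λ| < ε |q^ℓ λ|}`. -/
def spiralNhd (q lam : ℂ) (K : ℕ) (ε : ℝ) : Set ℂ :=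
  {z : ℂ | z ≠ 0 ∧ ∃ j : ℤ,
    ‖z - qpow q ((j : ℚ) / K) * lam‖ < ε * ‖qpow q ((j : ℚ) / K) * lam‖}

/-- Membership in the space `ℍ^{[λ]}_{μ,K}`: `f` is meromorphic on a punctured
neighborhood of `0` in `ℂ*` and can be continued analytically to a connected domain `Ω`
containing an `ε`-neighborhood of the spiral `λ q^{K⁻¹ℤ}`, with
`q^{1/μ}`-exponential growth of order 1 at infinity:
`|f(z)| < L·Θ_{|q|^{1/μ}}(M|z|)` on `Ω`. -/
def memH (q : ℂ) (μ : ℚ) (K : ℕ) (lam : ℂ) (f : ℂ → ℂ) : Prop :=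
  (∃ r > 0, MeromorphicOn f {z : ℂ | z ≠ 0 ∧ ‖z‖ < r}) ∧
  ∃ ε > 0, ∃ Ω : Set ℂ, IsOpen Ω ∧ IsConnected Ω ∧ spiralNhd q lam K ε ⊆ Ω ∧
    AnalyticOnNhd ℂ f Ω ∧
    ∃ L > 0, ∃ M > 0, ∀ z ∈ Ω, ‖f z‖ < L * thetaR (qpowR ‖q‖ (1 / μ)) (M * ‖z‖)

/-- The `q`-Laplace transform of order `μ` in the direction `λ`:
`L^{[λ]}_{μ,K}(f)(z) = (μ/K) ∑_{ℓ∈K⁻¹ℤ} f(q^ℓ λ) / Θ_{q^{1/μ}}(q^{1/μ+ℓ} λ / z)`. -/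
noncomputable def qLaplace (q : ℂ) (μ : ℚ) (K : ℕ) (lam : ℂ) (f : ℂ → ℂ) (z : ℂ) : ℂ :=
  ((μ : ℂ) / (K : ℂ)) * ∑' j : ℤ, f (qpow q ((j : ℚ) / K) * lam) /
    theta (qpow q (1 / μ)) (qpow q (1 / μ + (j : ℚ) / K) * lam / z)

/-- The q-Gevrey asymptotic relation `f ∼^{[λ]}_{μ,K} f̂` for a function `f` and a formal
power series with coefficients `a : ℕ → ℂ`: for all sufficiently small `ε, R > 0` there are
`L, M > 0` such that for every `k ∈ ℕ` and every `z` with `0 < |z| < R` staying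
`ε`-away from the spiral `-λq^{K⁻¹ℤ}`,
`|f(z) - ∑_{i<k} aᵢ zⁱ| < L M^k |q|^{k(k-1)/(2μ)} |z|^k`. -/
def qAsymptotic (q : ℂ) (μ : ℚ) (K : ℕ) (lam : ℂ) (f : ℂ → ℂ) (a : ℕ → ℂ) : Prop :=
  ∃ ε₀ > 0, ∃ R₀ > 0, ∀ ε : ℝ, 0 < ε → ε < ε₀ → ∀ R : ℝ, 0 < R → R < R₀ →
    ∃ L > 0, ∃ M > 0, ∀ k : ℕ, ∀ z : ℂ, z ≠ 0 → ‖z‖ < R →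
      (∀ j : ℤ, ε * ‖qpow q ((j : ℚ) / K) * lam‖ ≤ ‖z + qpow q ((j : ℚ) / K) * lam‖) →
      ‖f z - ∑ i ∈ Finset.range k, a i * z ^ i‖
        < L * M ^ k * ‖q‖ ^ (((k * (k - 1) : ℚ) / (2 * μ) : ℚ) : ℝ) * ‖z‖ ^ k

section Helpers
open Filter Topology

theorem hasSum_congr_aux {α β : Type*} [AddCommMonoid α] [TopologicalSpace α] {f g : β → α} {a : α}
    (h : ∀ b, f b = g b) : HasSum f a ↔ HasSum g a := by
  rw [show f = g from funext h]

def tri (l : ℤ) : ℤ := l * (l + 1) / 2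

theorem two_tri (l : ℤ) : 2 * tri l = l * (l + 1) := by
  unfold tri
  exact Int.mul_ediv_cancel' (Int.even_mul_succ_self l).two_dvd

theorem tri_neg (l : ℤ) : tri (-l - 1) = tri l := by
  have h1 := two_tri (-l - 1)
  have h2 := two_tri l
  nlinarith

theorem tri_add (k n : ℤ) : tri (k + n) = tri k + tri n + k * n := by
  have h1 := two_tri (k + n)
  have h2 := two_tri k
  have h3 := two_tri n
  nlinarith

theorem tri_pred (n : ℤ) : tri (n - 1) = tri n - n := by
  have h1 := two_tri (n - 1)
  have h3 := two_tri n
  nlinarith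

theorem tri_succ (n : ℤ) : tri (n + 1) = tri n + n + 1 := by
  have h1 := two_tri (n + 1)
  have h3 := two_tri n
  nlinarith

theorem tri_nonneg (n : ℤ) : 0 ≤ tri n := by
  have h3 := two_tri n
  rcases le_or_gt 0 n with h | h
  · nlinarith
  · have : n + 1 ≤ 0 := h
    nlinarith

noncomputable def th {𝕜 : Type*} [RCLike 𝕜] (p z : 𝕜) : 𝕜 :=
  ∑' l : ℤ, p ^ (-tri l) * z ^ l

/-- summability on the nonnegative side -/
theorem th_summable_nat {P x : ℝ} (hP : 1 < P) (hx : 0 < x) :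
    Summable (fun n : ℕ => P ^ (-tri n) * x ^ n) := by
  have hP0 : (0:ℝ) < P := by linarith
  have hlim : Tendsto (fun n : ℕ => x * (P⁻¹ ^ (n + 1))) atTop (𝓝 0) := by
    have := (tendsto_pow_atTop_nhds_zero_of_lt_one (inv_nonneg.2 hP0.le)
      (inv_lt_one_of_one_lt₀ hP)).comp (tendsto_add_atTop_nat 1)
    simpa using this.const_mul x
  refine summable_of_ratio_test_tendsto_lt_one (l := 0) one_pos ?_ ?_
  · filter_upwards with n
    positivity
  · refine hlim.congr fun n => ?_
    rw [Real.norm_of_nonneg (by positivity), Real.norm_of_nonneg (by positivity)]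
    rw [eq_div_iff (by positivity)]
    push_cast
    rw [tri_succ, show (-(tri (n:ℤ) + n + 1)) = -tri n + -((n + 1 : ℕ) : ℤ) by push_cast; ring,
      zpow_add₀ hP0.ne', zpow_neg P ((n+1 : ℕ) : ℤ), zpow_natCast, inv_pow, pow_succ x]
    ring

theorem th_summable_real {P x : ℝ} (hP : 1 < P) (hx : 0 < x) :
    Summable (fun l : ℤ => P ^ (-tri l) * x ^ l) := by
  refine Summable.of_nat_of_neg_add_one ?_ ?_
  · simpa using th_summable_nat hP hx
  · have := (th_summable_nat hP (inv_pos.2 hx)).mul_left x⁻¹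
    refine this.congr fun n => ?_
    have h : (-((n:ℤ) + 1)) = -(n:ℤ) - 1 := by ring
    rw [h, tri_neg, zpow_sub₀ hx.ne', zpow_neg x, zpow_natCast, inv_pow, zpow_one]
    field_simp

section
variable {𝕜 : Type*} [RCLike 𝕜]

theorem th_summable_norm {p z : 𝕜} (hp : 1 < ‖p‖) (hz : z ≠ 0) :
    Summable (fun l : ℤ => ‖p ^ (-tri l) * z ^ l‖) := by
  simpa [norm_mul, norm_zpow] using th_summable_real hp (norm_pos_iff.2 hz)

theorem th_summable {p z : 𝕜} (hp : 1 < ‖p‖) (hz : z ≠ 0) :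
    Summable (fun l : ℤ => p ^ (-tri l) * z ^ l) := (th_summable_norm hp hz).of_norm

theorem th_shift {p z : 𝕜} (hp : 1 < ‖p‖) (hz : z ≠ 0) (n : ℤ) :
    th p (p ^ n * z) = p ^ tri (n - 1) * z ^ n * th p z := by
  have hp0 : p ≠ 0 := by rintro rfl; simp at hp; linarith
  unfold th
  rw [← (Equiv.addRight n).tsum_eq, ← tsum_mul_left]
  refine tsum_congr fun k => ?_
  simp only [Equiv.coe_addRight]
  rw [mul_zpow, ← zpow_mul, ← mul_assoc, ← zpow_add₀ hp0, zpow_add₀ hz]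
  have : -tri (k + n) + n * (k + n) = tri (n - 1) + -tri k := by
    have := two_tri n
    rw [tri_add, tri_pred]
    nlinarith
  rw [this, zpow_add₀ hp0]
  ring

theorem th_inv {p z : 𝕜} (hz : z ≠ 0) :
    th p z⁻¹ = z * th p z := by
  unfold th
  rw [← (Equiv.subLeft (-1:ℤ)).tsum_eq, ← tsum_mul_left]
  refine tsum_congr fun k => ?_
  simp only [Equiv.subLeft_apply]
  rw [show (-1 - k : ℤ) = -k - 1 by ring, tri_neg, inv_zpow, ← zpow_neg,
    show (-(-k - 1) : ℤ) = k + 1 by ring, zpow_add_one₀ hz]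
  ring

theorem th_pos {P x : ℝ} (hP : 1 < P) (hx : 0 < x) : 0 < th P x := by
  have hP0 : (0:ℝ) < P := by linarith
  exact (th_summable_real hP hx).tsum_pos (fun i => by positivity) 0 (by positivity)

theorem moment1 {p w : 𝕜} (hp : 1 < ‖p‖) (hw : w ≠ 0) (hth : th p w ≠ 0) (i : ℕ) :
    HasSum (fun n : ℤ => (p ^ n * w) ^ i / th p (p * (p ^ n * w))) (p ^ tri (i - 1)) := by
  have hp0 : p ≠ 0 := by rintro rfl; simp at hp; linarith
  have h1 := (th_summable (p := p) (z := p ^ (i:ℤ) * w⁻¹) hp (by positivity)).hasSum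
  have h2 : ∑' l : ℤ, p ^ (-tri l) * (p ^ (i:ℤ) * w⁻¹) ^ l = p ^ tri (i - 1) * (w⁻¹) ^ (i:ℤ) * (w * th p w) := by
    rw [← th_inv hw, ← th_shift hp (inv_ne_zero hw)]; rfl
  rw [h2] at h1
  have h3 := h1.mul_left (w ^ (i:ℤ) / (w * th p w))
  have e : w ^ (i:ℤ) / (w * th p w) * (p ^ tri (i - 1) * (w⁻¹) ^ (i:ℤ) * (w * th p w))
      = p ^ tri (i - 1) := by
    rw [inv_zpow]; field_simp
  rw [e] at h3
  refine (hasSum_congr_aux fun n => ?_).mp h3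
  have e1 : p * (p ^ n * w) = p ^ (n + 1) * w := by rw [zpow_add_one₀ hp0]; ring
  rw [e1, th_shift hp hw, show n + 1 - 1 = n by ring, mul_zpow, mul_pow, ← zpow_natCast (p ^ n),
    ← zpow_mul, ← zpow_natCast w, ← zpow_mul, mul_comm n (i:ℤ), zpow_add_one₀ hw, inv_zpow,
    zpow_neg]
  field_simp

theorem moment2 {p s u : 𝕜} (hp : 1 < ‖p‖) {m : ℕ} (hm : 0 < m) (hs : s ^ m = p) (hu : u ≠ 0)
    (hth : ∀ j : ℤ, th p (s ^ j * u) ≠ 0) (i : ℕ) :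
    HasSum (fun j : ℤ => (s ^ j * u) ^ i / th p (p * (s ^ j * u))) (m * p ^ tri (i - 1)) := by
  have hp0 : p ≠ 0 := by rintro rfl; simp at hp; linarith
  have hs0 : s ≠ 0 := by
    rintro rfl
    rw [zero_pow hm.ne'] at hs
    exact hp0 hs.symm
  set F : ℤ → 𝕜 := fun j => (s ^ j * u) ^ i / th p (p * (s ^ j * u)) with hF
  have key : ∀ r ∈ Finset.range m, HasSum (fun j : ℤ => if j % m = r then F j else 0)
      (p ^ tri (i - 1)) := by
    intro r hr
    have hr' := Finset.mem_range.1 hr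
    have h1 := moment1 hp (w := s ^ (r:ℤ) * u) (by positivity) (hth r) i
    have hinj : Function.Injective (fun n : ℤ => n * m + r) := by
      intro a b hab
      simp only [add_left_inj] at hab
      exact mul_right_cancel₀ (by exact_mod_cast hm.ne') hab
    rw [← hinj.hasSum_iff]
    · refine (hasSum_congr_aux fun n => ?_).mp h1
      have : (n * m + r : ℤ) % m = r := by
        rw [Int.add_emod, Int.mul_emod_left, zero_add, Int.emod_emod_of_dvd _ dvd_rfl]
        exact Int.emod_eq_of_lt (by positivity) (by exact_mod_cast hr')
      simp only [Function.comp, this, if_true, hF]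
      have e : p ^ n * (s ^ (r:ℤ) * u) = s ^ (n * m + r) * u := by
        rw [zpow_add₀ hs0, mul_comm n (m:ℤ), zpow_mul, zpow_natCast s m, hs]; ring
      rw [e]
    · intro x hx
      rw [if_neg]
      intro h
      apply hx
      refine ⟨x / m, ?_⟩
      have := Int.mul_ediv_add_emod x m
      simp only
      rw [h] at this
      linarith
  have h2 := hasSum_sum key
  simp only [Finset.sum_const, Finset.card_range, nsmul_eq_mul] at h2
  refine (hasSum_congr_aux fun j => ?_).mp h2
  have hm' : (0:ℤ) < m := by exact_mod_cast hm
  obtain ⟨r, hr⟩ := Int.eq_ofNat_of_zero_le (Int.emod_nonneg j hm'.ne')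
  have hrm : r < m := by
    have := Int.emod_lt_of_pos j hm'
    rw [hr] at this; exact_mod_cast this
  rw [Finset.sum_eq_single r]
  · simp [hr]
  · intro b _ hb
    rw [if_neg]
    rw [hr]
    intro h
    exact hb (by exact_mod_cast h.symm)
  · intro h; exact absurd (Finset.mem_range.2 hrm) h
end

/-! ### triple product and nonvanishing -/

noncomputable def poch (x : ℂ) (n : ℕ) : ℂ := ∏ i ∈ Finset.range n, (1 + -x ^ (i + 1))

noncomputable def rp (x : ℂ) (n : ℤ) : ℂ := if n < 0 then 0 else (poch x n.toNat)⁻¹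

theorem one_sub_pow_ne {x : ℂ} (hx : ‖x‖ < 1) (i : ℕ) : 1 + -x ^ (i + 1) ≠ 0 := by
  intro h
  have h1 : x ^ (i + 1) = 1 := by linear_combination -h
  have h2 : ‖x‖ ^ (i + 1) = 1 := by rw [← norm_pow, h1, norm_one]
  have h3 := pow_lt_one₀ (norm_nonneg x) hx (Nat.succ_ne_zero i)
  rw [h2] at h3
  exact lt_irrefl _ h3

theorem poch_ne {x : ℂ} (hx : ‖x‖ < 1) (n : ℕ) : poch x n ≠ 0 :=
  Finset.prod_ne_zero_iff.2 fun i _ => one_sub_pow_ne hx i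

theorem rp_step {x : ℂ} (hx : ‖x‖ < 1) (n : ℤ) : rp x (n - 1) = (1 - x ^ n) * rp x n := by
  unfold rp
  rcases lt_trichotomy n 0 with h | h | h
  · rw [if_pos h, if_pos (by omega)]; simp
  · subst h; simp
  · rw [if_neg (by omega), if_neg (by omega)]
    obtain ⟨k, rfl⟩ : ∃ k : ℕ, n = k + 1 := ⟨(n - 1).toNat, by omega⟩
    have e1 : ((k:ℤ) + 1 - 1).toNat = k := by omega
    have e2 : ((k:ℤ) + 1).toNat = k + 1 := by omega
    rw [e1, e2]
    have h1 := poch_ne hx k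
    have h2 := one_sub_pow_ne hx k
    have h3 : poch x (k + 1) = poch x k * (1 + -x ^ (k + 1)) := Finset.prod_range_succ _ _
    rw [h3, mul_inv]
    have h4 : (1 - x ^ ((k:ℤ) + 1)) = 1 + -x ^ (k + 1) := by
      rw [← sub_eq_add_neg]; norm_cast
    rw [h4]
    field_simp

theorem tendsto_prod_ne {u : ℕ → ℂ} (hu : Summable (fun i => ‖u i‖)) (h : ∀ i, 1 + u i ≠ 0) :
    ∃ l : ℂ, l ≠ 0 ∧ Tendsto (fun n => ∏ i ∈ Finset.range n, (1 + u i)) atTop (𝓝 l) :=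
  ⟨_, tprod_one_add_ne_zero_of_summable h hu,
    (multipliable_one_add_of_summable hu).hasProd.tendsto_prod_nat⟩

noncomputable def FN (x w : ℂ) (N : ℕ) : ℂ :=
  (∏ i ∈ Finset.range N, (1 + w * x ^ (i + 1))) * ∏ i ∈ Finset.range N, (1 + w⁻¹ * x ^ i)

theorem finite_triple {x w : ℂ} (hx : ‖x‖ < 1) (hx0 : x ≠ 0) (hw : w ≠ 0) (N : ℕ) :
    HasSum (fun j : ℤ => x ^ tri j * (rp x (N - j) * rp x (N + j)) * w ^ j)
      (FN x w N / poch x (2 * N)) := by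
  induction N with
  | zero =>
    have : FN x w 0 / poch x (2 * 0) = x ^ tri 0 * (rp x ((0:ℕ) - 0) * rp x ((0:ℕ) + 0)) * w ^ (0:ℤ) := by
      simp [FN, poch, rp, tri]
    rw [this]
    refine hasSum_single 0 fun j hj => ?_
    rcases lt_or_gt_of_ne hj with h | h
    · have : rp x ((0:ℕ) + j) = 0 := by simp [rp, h]
      rw [this]; ring
    · have : rp x ((0:ℕ) - j) = 0 := by simp [rp, h]
      rw [this]; ring
  | succ N ih =>
    have hA := ih.mul_left (1 + x ^ (2 * N + 1))
    have hB := ((Equiv.addRight (-1:ℤ)).hasSum_iff.mpr ih).mul_left (w * x ^ (N + 1))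
    have hC := ((Equiv.addRight (1:ℤ)).hasSum_iff.mpr ih).mul_left (w⁻¹ * x ^ N)
    have hD := ((hA.add hB).add hC).mul_left (((1 + -x ^ (2 * N + 1)) * (1 + -x ^ (2 * N + 2)))⁻¹)
    have hn1 := one_sub_pow_ne hx (2 * N)
    have hn2 := one_sub_pow_ne hx (2 * N + 1)
    have hp := poch_ne hx (2 * N)
    have e1 : FN x w (N + 1) = FN x w N * ((1 + w * x ^ (N + 1)) * (1 + w⁻¹ * x ^ N)) := by
      unfold FN; rw [Finset.prod_range_succ, Finset.prod_range_succ]; ring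
    have e2 : poch x (2 * (N + 1)) = poch x (2 * N) * ((1 + -x ^ (2 * N + 1)) * (1 + -x ^ (2 * N + 2))) := by
      unfold poch
      rw [show 2 * (N + 1) = 2 * N + 1 + 1 by ring, Finset.prod_range_succ, Finset.prod_range_succ]
      ring
    have e3 : ((1 + -x ^ (2 * N + 1)) * (1 + -x ^ (2 * N + 2)))⁻¹ *
        ((1 + x ^ (2 * N + 1)) * (FN x w N / poch x (2 * N)) +
          w * x ^ (N + 1) * (FN x w N / poch x (2 * N)) +
          w⁻¹ * x ^ N * (FN x w N / poch x (2 * N))) = FN x w (N + 1) / poch x (2 * (N + 1)) := by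
      have e4 : (1 + w * x ^ (N + 1)) * (1 + w⁻¹ * x ^ N) =
          1 + x ^ (2 * N + 1) + w * x ^ (N + 1) + w⁻¹ * x ^ N := by
        have : w * w⁻¹ = 1 := mul_inv_cancel₀ hw
        linear_combination x ^ (2 * N + 1) * this
      rw [e1, e2, e4]
      generalize (1 + -x ^ (2 * N + 1)) * (1 + -x ^ (2 * N + 2)) = D
      rw [div_eq_mul_inv, div_eq_mul_inv, mul_inv]
      ring
    rw [e3] at hD
    refine (hasSum_congr_aux fun j => ?_).mp hD
    simp only [Function.comp, Equiv.coe_addRight]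
    have hne : (1 + -x ^ (2 * N + 1)) * (1 + -x ^ (2 * N + 2)) ≠ 0 := mul_ne_zero hn1 hn2
    rw [inv_mul_eq_iff_eq_mul₀ hne]
    set A := x ^ ((N:ℤ) - j) with hA'
    set B := x ^ ((N:ℤ) + j) with hB'
    have hAB : A * B = x ^ (2 * N) := by
      rw [hA', hB', ← zpow_add₀ hx0, ← zpow_natCast x]; congr 1; push_cast; ring
    set a := rp x (((N + 1 : ℕ) : ℤ) - j) with ha
    set b := rp x (((N + 1 : ℕ) : ℤ) + j) with hb
    have a1 : rp x (N - j) = (1 - A * x) * a := by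
      have := rp_step hx (((N + 1 : ℕ) : ℤ) - j)
      rw [show (((N + 1 : ℕ) : ℤ) - j - 1) = N - j by push_cast; ring] at this
      rw [this, hA', ← zpow_add_one₀ hx0]; congr 3; push_cast; ring
    have b1 : rp x (N + j) = (1 - B * x) * b := by
      have := rp_step hx (((N + 1 : ℕ) : ℤ) + j)
      rw [show (((N + 1 : ℕ) : ℤ) + j - 1) = N + j by push_cast; ring] at this
      rw [this, hB', ← zpow_add_one₀ hx0]; congr 3; push_cast; ring
    have a2 : rp x (N - (j + 1)) = (1 - A) * ((1 - A * x) * a) := by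
      rw [← a1, hA', ← rp_step hx]; congr 1; ring
    have b2 : rp x (N + (j + -1)) = (1 - B) * ((1 - B * x) * b) := by
      rw [← b1, hB', ← rp_step hx]; congr 1; ring
    have a3 : rp x (N - (j + -1)) = a := by rw [ha]; congr 1; push_cast; ring
    have b3 : rp x (N + (j + 1)) = b := by rw [hb]; congr 1; push_cast; ring
    rw [a1, b1, a2, b2, a3, b3]
    have t1 : w * x ^ (N + 1) * (x ^ tri (j + -1) * (a * ((1 - B) * ((1 - B * x) * b))) * w ^ (j + -1))
        = x ^ tri j * w ^ j * (A * x) * (a * ((1 - B) * ((1 - B * x) * b))) := by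
      have u1 : w * w ^ (j + -1) = w ^ j := by rw [← zpow_one_add₀ hw]; congr 1; ring
      have u2 : x ^ (N + 1) * x ^ tri (j + -1) = x ^ tri j * (A * x) := by
        rw [← zpow_natCast x, ← zpow_add₀ hx0, hA', ← zpow_add_one₀ hx0, ← zpow_add₀ hx0, ← sub_eq_add_neg, tri_pred]
        congr 1; push_cast; ring
      linear_combination (x ^ (N + 1) * x ^ tri (j + -1) * (a * ((1 - B) * ((1 - B * x) * b)))) * u1
        + w ^ j * (a * ((1 - B) * ((1 - B * x) * b))) * u2
    have t2 : w⁻¹ * x ^ N * (x ^ tri (j + 1) * ((1 - A) * ((1 - A * x) * a) * b) * w ^ (j + 1))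
        = x ^ tri j * w ^ j * (B * x) * ((1 - A) * ((1 - A * x) * a) * b) := by
      have u1 : w⁻¹ * w ^ (j + 1) = w ^ j := by rw [zpow_add_one₀ hw]; field_simp
      have u2 : x ^ N * x ^ tri (j + 1) = x ^ tri j * (B * x) := by
        rw [← zpow_natCast x, ← zpow_add₀ hx0, hB', ← zpow_add_one₀ hx0, ← zpow_add₀ hx0, tri_succ]
        congr 1; ring
      linear_combination (x ^ N * x ^ tri (j + 1) * ((1 - A) * ((1 - A * x) * a) * b)) * u1
        + w ^ j * ((1 - A) * ((1 - A * x) * a) * b) * u2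
    rw [t1, t2, pow_succ x (2 * N), pow_add x (2 * N) 2, ← hAB]
    ring

theorem th_ne_zero {p w : ℂ} (hp : 1 < ‖p‖) (hw : w ≠ 0) (h : ∀ n : ℤ, w + p ^ n ≠ 0) :
    th p w ≠ 0 := by
  have hp0 : p ≠ 0 := by rintro rfl; simp at hp; linarith
  set x := p⁻¹ with hxp
  have hx0 : x ≠ 0 := inv_ne_zero hp0
  have hx : ‖x‖ < 1 := by rw [hxp, norm_inv]; exact inv_lt_one_of_one_lt₀ hp
  have hgeo : Summable (fun i : ℕ => ‖x‖ ^ i) := summable_geometric_of_lt_one (norm_nonneg _) hx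
  obtain ⟨l1, hl1, T1⟩ := tendsto_prod_ne (u := fun i => -x ^ (i + 1))
    (by simpa [pow_succ] using hgeo.mul_right ‖x‖) (one_sub_pow_ne hx)
  obtain ⟨l2, hl2, T2⟩ := tendsto_prod_ne (u := fun i => w * x ^ (i + 1))
    (by simpa [pow_succ] using (hgeo.mul_right ‖x‖).mul_left ‖w‖) (by
      intro i hi
      apply h ((i + 1 : ℕ) : ℤ)
      have : x ^ (i + 1) * p ^ (i + 1) = 1 := by rw [hxp, ← mul_pow, inv_mul_cancel₀ hp0, one_pow]
      rw [zpow_natCast]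
      linear_combination p ^ (i + 1) * hi - w * this)
  obtain ⟨l3, hl3, T3⟩ := tendsto_prod_ne (u := fun i => w⁻¹ * x ^ i)
    (by simpa using hgeo.mul_left ‖w‖⁻¹) (by
      intro i hi
      apply h (-(i : ℤ))
      have e : p ^ (-(i:ℤ)) = x ^ i := by rw [zpow_neg, zpow_natCast, hxp, inv_pow]
      rw [e]
      have : w * w⁻¹ = 1 := mul_inv_cancel₀ hw
      linear_combination w * hi - x ^ i * this)
  -- limit of rp
  have T1' : Tendsto (fun n : ℕ => (poch x n)⁻¹) atTop (𝓝 l1⁻¹) := T1.inv₀ hl1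
  obtain ⟨C, hC⟩ : ∃ C, ∀ n : ℕ, ‖(poch x n)⁻¹‖ ≤ C := by
    obtain ⟨C, hC⟩ := (Metric.isBounded_range_of_tendsto _ T1').exists_norm_le
    exact ⟨C, fun n => hC _ ⟨n, rfl⟩⟩
  have hC0 : 0 ≤ C := (norm_nonneg _).trans (hC 0)
  have hCr : ∀ n : ℤ, ‖rp x n‖ ≤ C := by
    intro n; unfold rp; split_ifs
    · simpa using hC0
    · exact hC _
  have T4 : Tendsto (rp x) atTop (𝓝 l1⁻¹) := by
    have : Tendsto (fun n : ℤ => (poch x n.toNat)⁻¹) atTop (𝓝 l1⁻¹) :=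
      T1'.comp (tendsto_atTop.2 fun b => by
        filter_upwards [eventually_ge_atTop (b:ℤ)] with n hn
        omega)
    refine this.congr' ?_
    filter_upwards [eventually_ge_atTop (0:ℤ)] with n hn
    simp [rp, not_lt.2 hn]
  have T5 : Tendsto (fun N : ℕ => ∑' j : ℤ, x ^ tri j * (rp x (N - j) * rp x (N + j)) * w ^ j) atTop
      (𝓝 (∑' j : ℤ, x ^ tri j * (l1⁻¹ * l1⁻¹) * w ^ j)) := by
    refine tendsto_tsum_of_dominated_convergence
      (bound := fun j : ℤ => C * C * ‖p ^ (-tri j) * w ^ j‖) ((th_summable_norm hp hw).mul_left _) ?_ ?_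
    · intro j
      have i1 : Tendsto (fun N : ℕ => rp x (N - j)) atTop (𝓝 l1⁻¹) :=
        T4.comp ((tendsto_atTop_add_const_right _ (-j) tendsto_natCast_atTop_atTop))
      have i2 : Tendsto (fun N : ℕ => rp x (N + j)) atTop (𝓝 l1⁻¹) :=
        T4.comp ((tendsto_atTop_add_const_right _ j tendsto_natCast_atTop_atTop))
      exact ((i1.mul i2).const_mul _).mul_const _
    · refine Eventually.of_forall fun N j => ?_
      have e : p ^ (-tri j) = x ^ tri j := by rw [hxp, inv_zpow, zpow_neg]
      rw [e, norm_mul, norm_mul, norm_mul, norm_mul]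
      have := mul_le_mul (hCr (N - j)) (hCr (N + j)) (norm_nonneg _) hC0
      calc _ = (‖rp x (N - j)‖ * ‖rp x (N + j)‖) * (‖x ^ tri j‖ * ‖w ^ j‖) := by ring
        _ ≤ _ := by gcongr
  intro h0
  have e0 : ∑' j : ℤ, x ^ tri j * (l1⁻¹ * l1⁻¹) * w ^ j = 0 := by
    have : ∀ j : ℤ, x ^ tri j * (l1⁻¹ * l1⁻¹) * w ^ j = (l1⁻¹ * l1⁻¹) * (p ^ (-tri j) * w ^ j) := by
      intro j
      have e : p ^ (-tri j) = x ^ tri j := by rw [hxp, inv_zpow, zpow_neg]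
      rw [e]; ring
    simp_rw [this]
    rw [tsum_mul_left]
    change _ * th p w = 0
    rw [h0, mul_zero]
  rw [e0] at T5
  have T6 : Tendsto (fun N : ℕ => FN x w N / poch x (2 * N)) atTop (𝓝 (l2 * l3 / l1)) :=
    (T2.mul T3).div (T1.comp (tendsto_id.const_mul_atTop' (by norm_num : 0 < 2))) hl1
  have : (fun N : ℕ => ∑' j : ℤ, x ^ tri j * (rp x (N - j) * rp x (N + j)) * w ^ j) =
      fun N : ℕ => FN x w N / poch x (2 * N) := by
    funext N; exact (finite_triple hx hx0 hw N).tsum_eq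
  rw [this] at T5
  have := tendsto_nhds_unique T5 T6
  exact (div_ne_zero (mul_ne_zero hl2 hl3) hl1) this.symm

theorem zpow_le_aux {P x : ℝ} (h1 : 1 ≤ x) (h2 : x ≤ P) (l : ℤ) : x ^ l ≤ 1 ^ l + P ^ l := by
  have hx : 0 < x := by linarith
  have hP : 0 < P := by linarith
  rcases le_or_gt 0 l with h | h
  · have := zpow_le_zpow_left₀ h hx.le h2
    rw [one_zpow]; linarith
  · have := zpow_le_one_of_nonpos₀ h1 h.le
    have h3 : 0 < P ^ l := by positivity
    rw [one_zpow]; linarith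

theorem th_lower {p : ℂ} (hp : 1 < ‖p‖) {ε : ℝ} (hε : 0 < ε) :
    ∃ c > 0, ∀ w : ℂ, w ≠ 0 → (∀ n : ℤ, ε * ‖p‖ ^ n ≤ ‖w + p ^ n‖) →
      c * th ‖p‖ ‖w‖ ≤ ‖th p w‖ := by
  have hp0 : p ≠ 0 := by rintro rfl; simp at hp; linarith
  have hP0 : 0 < ‖p‖ := by linarith
  set P := ‖p‖ with hP
  have hb : Summable (fun l : ℤ => P ^ (-tri l) * 1 ^ l + P ^ (-tri l) * P ^ l) :=
    (th_summable_real hp one_pos).add (th_summable_real hp hP0)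
  set D : ℝ := ∑' l : ℤ, (P ^ (-tri l) * 1 ^ l + P ^ (-tri l) * P ^ l) with hD
  have hup : ∀ x : ℝ, 1 ≤ x → x ≤ P → th P x ≤ D := by
    intro x h1 h2
    refine Summable.tsum_le_tsum (fun l => ?_) (th_summable_real hp (by linarith)) hb
    rw [← mul_add]
    exact mul_le_mul_of_nonneg_left (zpow_le_aux h1 h2 l) (by positivity)
  have hDpos : 0 < D := (th_pos hp one_pos).trans_le (hup 1 le_rfl hp.le)
  set S : Set ℂ := {u | (1 ≤ ‖u‖ ∧ ‖u‖ ≤ P) ∧ ∀ n : ℤ, ε * P ^ n ≤ ‖u + p ^ n‖} with hS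
  have hcont : ContinuousOn (th p) S := by
    refine continuousOn_tsum (u := fun l : ℤ => P ^ (-tri l) * 1 ^ l + P ^ (-tri l) * P ^ l)
      ?_ hb ?_
    · intro l
      refine continuousOn_const.mul ?_
      refine continuousOn_id.zpow₀ l ?_
      intro u hu
      left
      intro h
      have := hu.1.1
      simp only [id] at h
      rw [h, norm_zero] at this
      linarith
    · intro l u hu
      rw [norm_mul, norm_zpow, norm_zpow, ← mul_add]
      exact mul_le_mul_of_nonneg_left (zpow_le_aux hu.1.1 hu.1.2 l) (by positivity)
  have hScl : IsClosed S := by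
    have h1 : IsClosed {u : ℂ | 1 ≤ ‖u‖ ∧ ‖u‖ ≤ P} :=
      (isClosed_le continuous_const continuous_norm).inter
        (isClosed_le continuous_norm continuous_const)
    have h2 : IsClosed {u : ℂ | ∀ n : ℤ, ε * P ^ n ≤ ‖u + p ^ n‖} := by
      rw [Set.ofPred_forall]
      exact isClosed_iInter fun n => isClosed_le continuous_const (by fun_prop)
    exact h1.inter h2
  have hScpt : IsCompact S := by
    refine Metric.isCompact_of_isClosed_isBounded hScl ?_
    refine (Metric.isBounded_closedBall (x := (0:ℂ)) (r := P)).subset ?_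
    intro u hu
    simpa using hu.1.2
  have hnz : ∀ u ∈ S, 0 < ‖th p u‖ := by
    intro u hu
    rw [norm_pos_iff]
    refine th_ne_zero hp ?_ fun n h => ?_
    · intro h
      have := hu.1.1
      rw [h, norm_zero] at this
      linarith
    · have := hu.2 n
      rw [h, norm_zero] at this
      have h3 : 0 < ε * P ^ n := by positivity
      linarith
  obtain ⟨c0, hc0, hc⟩ : ∃ c0 > 0, ∀ u ∈ S, c0 ≤ ‖th p u‖ := by
    rcases S.eq_empty_or_nonempty with h | h
    · exact ⟨1, one_pos, by simp [h]⟩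
    · obtain ⟨u0, hu0, hmin⟩ := hScpt.exists_isMinOn h hcont.norm
      exact ⟨_, hnz u0 hu0, fun u hu => hmin hu⟩
  refine ⟨c0 / D, by positivity, fun w hw hn => ?_⟩
  obtain ⟨n, hn1, hn2⟩ := exists_mem_Ico_zpow (norm_pos_iff.2 hw) hp
  obtain ⟨u, hwu⟩ : ∃ u, w = p ^ n * u := ⟨p ^ (-n) * w, by
    rw [← mul_assoc, ← zpow_add₀ hp0]; simp⟩
  have hu0 : u ≠ 0 := by
    rintro rfl
    simp at hwu
    exact hw hwu
  have hPn : 0 < P ^ n := by positivity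
  have hnu : ‖w‖ = P ^ n * ‖u‖ := by rw [hwu, norm_mul, norm_zpow]
  have huS : u ∈ S := by
    refine ⟨⟨?_, ?_⟩, fun k => ?_⟩
    · rw [hnu] at hn1
      exact le_of_mul_le_mul_left (by simpa using hn1) hPn
    · rw [hnu, zpow_add_one₀ hP0.ne'] at hn2
      exact (lt_of_mul_lt_mul_left hn2 hPn.le).le
    · have := hn (n + k)
      rw [hwu, zpow_add₀ hp0, zpow_add₀ hP0.ne', ← mul_add, norm_mul, norm_zpow] at this
      refine le_of_mul_le_mul_left ?_ hPn
      linarith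
  have hPp : 1 < ‖P‖ := by rwa [Real.norm_of_nonneg hP0.le]
  rw [hnu, th_shift hPp (norm_ne_zero_iff.2 hu0), hwu, th_shift hp hu0, norm_mul, norm_mul,
    norm_zpow, norm_zpow]
  have h1 : c0 / D * th P ‖u‖ ≤ ‖th p u‖ := by
    calc c0 / D * th P ‖u‖ ≤ c0 / D * D := by
          gcongr
          exact hup _ huS.1.1 huS.1.2
      _ = c0 := by field_simp
      _ ≤ _ := hc u huS
  calc _ = (P ^ tri (n - 1) * ‖u‖ ^ n) * (c0 / D * th P ‖u‖) := by ring
    _ ≤ _ := by gcongr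

/-! ### pointwise bounds -/

theorem G_ge_one {G : ℕ → ℝ} {g : ℝ} (hg : 1 ≤ g) (h0 : G 0 = 1)
    (hG : ∀ k, G (k + 1) = G k * g ^ k) (k : ℕ) : 1 ≤ G k := by
  induction k with
  | zero => exact h0.ge
  | succ k ih => rw [hG]; exact one_le_mul_of_one_le_of_one_le ih (one_le_pow₀ hg)

theorem G_mono {G : ℕ → ℝ} {g : ℝ} (hg : 1 ≤ g) (h0 : G 0 = 1)
    (hG : ∀ k, G (k + 1) = G k * g ^ k) : Monotone G := by
  refine monotone_nat_of_le_succ fun k => ?_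
  rw [hG]
  exact le_mul_of_one_le_right (by linarith [G_ge_one hg h0 hG k]) (one_le_pow₀ hg)

theorem sum_le_two_pow {k : ℕ} {y : ℝ} (hy : 1 ≤ y) {b : ℕ → ℝ} {A : ℝ} (hA : 0 ≤ A)
    (hb : ∀ i < k, b i ≤ A * y ^ i) :
    ∑ i ∈ Finset.range k, b i ≤ A * (2 * y) ^ k := by
  have hy0 : 0 ≤ y := by linarith
  calc ∑ i ∈ Finset.range k, b i ≤ ∑ i ∈ Finset.range k, A * y ^ k := by
        refine Finset.sum_le_sum fun i hi => ?_
        have hi' := Finset.mem_range.1 hi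
        refine (hb i hi').trans ?_
        gcongr
    _ = k * (A * y ^ k) := by simp
    _ ≤ 2 ^ k * (A * y ^ k) := by
        gcongr
        exact_mod_cast Nat.lt_two_pow_self.le
    _ = _ := by rw [mul_pow]; ring

theorem th_upper {P M R : ℝ} (hP : 1 < P) (hM : 0 < M) (hR : 0 < R) :
    ∃ S > 0, ∃ B > 0, ∀ (k : ℕ) (X : ℝ), R ≤ X →
      th P (M * X) ≤ S * (B * X) ^ k + ∑' n : ℕ, P ^ (-tri (n + k : ℕ)) * (M * X) ^ (n + k) := by
  have hP0 : 0 < P := by linarith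
  set S0 : ℝ := ∑' n : ℕ, P ^ (-tri n) * (M * R)⁻¹ ^ (n + 1) with hS0
  have hsumS : ∀ x : ℝ, 0 < x → Summable (fun n : ℕ => P ^ (-tri n) * x⁻¹ ^ (n + 1)) := by
    intro x hx
    refine ((th_summable_nat hP (inv_pos.2 hx)).mul_right x⁻¹).congr fun n => ?_
    rw [pow_succ]; ring
  have hS0' : 0 ≤ S0 := tsum_nonneg fun n => by positivity
  have hRi : 0 < 1 / R := by positivity
  refine ⟨S0 + 1, by linarith, 2 * (M + 1 / R), by positivity, fun k X hX => ?_⟩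
  have hX0 : 0 < X := by linarith
  have hMX : 0 < M * X := by positivity
  have h1X : 1 ≤ (M + 1 / R) * X := by
    have : 1 ≤ 1 / R * X := by rw [one_div, inv_mul_eq_div, one_le_div hR]; exact hX
    nlinarith
  have hs1 : Summable (fun n : ℕ => P ^ (-tri (n:ℤ)) * (M * X) ^ (n:ℤ)) := by
    simpa using th_summable_nat hP hMX
  have e2 : ∀ n : ℕ, P ^ (-tri (-((n:ℤ) + 1))) * (M * X) ^ (-((n:ℤ) + 1)) =
      P ^ (-tri (n:ℤ)) * (M * X)⁻¹ ^ (n + 1) := by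
    intro n
    have h : (-((n:ℤ) + 1)) = -(n:ℤ) - 1 := by ring
    rw [← tri_neg n, ← h, inv_pow, zpow_neg (M * X)]
    norm_cast
  have hs2 : Summable (fun n : ℕ => P ^ (-tri (-((n:ℤ) + 1))) * (M * X) ^ (-((n:ℤ) + 1))) := by
    simp_rw [e2]; exact hsumS _ hMX
  have hsplit : th P (M * X) = (∑' n : ℕ, P ^ (-tri (n:ℤ)) * (M * X) ^ (n:ℤ)) +
      ∑' n : ℕ, P ^ (-tri (-((n:ℤ) + 1))) * (M * X) ^ (-((n:ℤ) + 1)) :=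
    tsum_of_nat_of_neg_add_one (f := fun l : ℤ => P ^ (-tri l) * (M * X) ^ l) hs1 hs2
  have hsec : ∑' n : ℕ, P ^ (-tri (-((n:ℤ) + 1))) * (M * X) ^ (-((n:ℤ) + 1)) ≤ S0 := by
    simp_rw [e2]
    refine Summable.tsum_le_tsum (fun n => ?_) (hsumS _ hMX) (hsumS _ (by positivity))
    gcongr
  have hfirst : (∑' n : ℕ, P ^ (-tri (n:ℤ)) * (M * X) ^ (n:ℤ)) =
      (∑ n ∈ Finset.range k, P ^ (-tri (n:ℤ)) * (M * X) ^ (n:ℤ)) +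
      ∑' n : ℕ, P ^ (-tri (n + k : ℕ)) * (M * X) ^ (n + k) := by
    rw [← hs1.sum_add_tsum_nat_add k]
    norm_cast
  have hfin : ∑ n ∈ Finset.range k, P ^ (-tri (n:ℤ)) * (M * X) ^ (n:ℤ) ≤
      1 * (2 * ((M + 1 / R) * X)) ^ k := by
    refine sum_le_two_pow h1X zero_le_one fun i _ => ?_
    rw [zpow_natCast]
    have h3 : P ^ (-tri (i:ℤ)) ≤ 1 := zpow_le_one_of_nonpos₀ hP.le (by linarith [tri_nonneg i])
    gcongr
    linarith
  have h4 : (1:ℝ) ≤ (2 * (M + 1 / R) * X) ^ k := one_le_pow₀ (by nlinarith)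
  have h5 : S0 ≤ S0 * (2 * (M + 1 / R) * X) ^ k := le_mul_of_one_le_right hS0' h4
  rw [hsplit, hfirst]
  rw [← mul_assoc] at hfin
  linarith

theorem pointwise {x : ℤ → ℂ} {fx : ℤ → ℂ} {a : ℕ → ℂ} {G : ℕ → ℝ} {g L M R L' M' P : ℝ}
    (hg : 1 ≤ g) (h0 : G 0 = 1) (hG : ∀ k, G (k + 1) = G k * g ^ k)
    (hL : 0 < L) (hM : 0 < M) (hR : 0 < R) (hL' : 0 < L') (hM' : 0 < M') (hP : 1 < P)
    (hx : ∀ j, x j ≠ 0) (hj0 : ∃ j, ‖x j‖ < R)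
    (hA : ∀ (k : ℕ) (j : ℤ), ‖x j‖ < R →
      ‖fx j - ∑ i ∈ Finset.range k, a i * x j ^ i‖ ≤ L * M ^ k * G k * ‖x j‖ ^ k)
    (hB : ∀ j, ‖fx j‖ ≤ L' * th P (M' * ‖x j‖)) :
    ∃ C > 0, ∃ B > 0, ∀ (k : ℕ) (j : ℤ),
      ‖fx j - ∑ i ∈ Finset.range k, a i * x j ^ i‖ ≤ C * B ^ k * G k * ‖x j‖ ^ k +
        C * ∑' n : ℕ, P ^ (-tri (n + k : ℕ)) * (M' * ‖x j‖) ^ (n + k) := by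
  have hP0 : 0 < P := by linarith
  have hg0 : 0 < g := by linarith
  have hG1 := G_ge_one hg h0 hG
  have hGm := G_mono hg h0 hG
  obtain ⟨S, hS, B2, hB2, hth⟩ := th_upper hP hM' hR
  obtain ⟨j0, hj0⟩ := hj0
  set y := ‖x j0‖ with hy
  have hy0 : 0 < y := norm_pos_iff.2 (hx j0)
  set A := L * (1 + M * y) with hAdef
  have hA0 : 0 < A := by positivity
  -- coefficient bound
  have hcoef : ∀ k, ‖a k‖ ≤ A * (M * g) ^ k * G k := by
    intro k
    have h1 := hA k j0 hj0
    have h2 := hA (k + 1) j0 hj0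
    rw [Finset.sum_range_succ] at h2
    have h3 : ‖a k‖ * y ^ k ≤ L * M ^ k * G k * y ^ k + L * M ^ (k + 1) * G (k + 1) * y ^ (k + 1) := by
      rw [hy, ← norm_pow, ← norm_mul]
      have : a k * x j0 ^ k = (fx j0 - ∑ i ∈ Finset.range k, a i * x j0 ^ i) -
        (fx j0 - (∑ i ∈ Finset.range k, a i * x j0 ^ i + a k * x j0 ^ k)) := by ring
      rw [this]
      refine (norm_sub_le _ _).trans ?_
      rw [norm_pow, ← hy]
      exact add_le_add h1 h2
    rw [hG] at h3
    have hGk : 0 < G k := by linarith [hG1 k]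
    have h5 : (1:ℝ) ≤ g ^ k := one_le_pow₀ hg
    have h4 : ‖a k‖ * y ^ k ≤ (A * (M * g) ^ k * G k) * y ^ k := by
      refine h3.trans ?_
      have : L * M ^ k * G k * y ^ k ≤ L * M ^ k * G k * y ^ k * g ^ k :=
        le_mul_of_one_le_right (by positivity) h5
      calc _ ≤ L * M ^ k * G k * y ^ k * g ^ k + L * M ^ (k + 1) * (G k * g ^ k) * y ^ (k + 1) := by
            linarith
        _ = _ := by rw [hAdef, mul_pow]; ring
    exact le_of_mul_le_mul_right h4 (by positivity)
  have hRi : 0 < 1 / R := by positivity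
  set B := M + 2 * (M * g + 1 / R) + B2 with hBdef
  have hB0 : 0 < B := by positivity
  refine ⟨L + A + L' * (S + 1), by positivity, B, hB0, fun k j => ?_⟩
  set X := ‖x j‖ with hX
  have hX0 : 0 < X := norm_pos_iff.2 (hx j)
  have hGk : 0 < G k := by linarith [hG1 k]
  have htail : 0 ≤ ∑' n : ℕ, P ^ (-tri (n + k : ℕ)) * (M' * X) ^ (n + k) :=
    tsum_nonneg fun n => by positivity
  set Tl := ∑' n : ℕ, P ^ (-tri (n + k : ℕ)) * (M' * X) ^ (n + k) with hTl
  rcases lt_or_ge X R with h | h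
  · refine (hA k j h).trans ?_
    have h1 : L * M ^ k * G k * X ^ k ≤ (L + A + L' * (S + 1)) * B ^ k * G k * X ^ k := by
      gcongr
      · have : 0 < L' * (S + 1) := by positivity
        linarith
      · have : 0 < M * g := by positivity
        rw [hBdef]; linarith
    have h2 : 0 ≤ (L + A + L' * (S + 1)) * Tl := by positivity
    linarith
  · have h1 : ‖∑ i ∈ Finset.range k, a i * x j ^ i‖ ≤ (A * G k) * (2 * ((M * g + 1 / R) * X)) ^ k := by
      refine (norm_sum_le _ _).trans ?_
      refine sum_le_two_pow ?_ (by positivity) fun i hi => ?_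
      · have : 1 ≤ 1 / R * X := by rw [one_div, inv_mul_eq_div, one_le_div hR]; exact h
        have : 0 < M * g * X := by positivity
        linarith
      · rw [norm_mul, norm_pow, ← hX]
        calc ‖a i‖ * X ^ i ≤ (A * (M * g) ^ i * G i) * X ^ i := by
              gcongr; exact hcoef i
          _ ≤ (A * (M * g + 1 / R) ^ i * G k) * X ^ i := by
              have hGi : 0 < G i := by linarith [hG1 i]
              gcongr
              · linarith
              · exact hGm hi.le
          _ = _ := by rw [mul_pow]; ring
    have h2 : ‖fx j‖ ≤ L' * (S * (B2 * X) ^ k + Tl) :=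
      (hB j).trans (mul_le_mul_of_nonneg_left (hth k X h) hL'.le)
    have h3 : (2 * ((M * g + 1 / R) * X)) ^ k ≤ B ^ k * X ^ k := by
      rw [← mul_pow, ← mul_assoc]
      gcongr
      rw [hBdef]; linarith
    have h4 : (B2 * X) ^ k ≤ G k * (B ^ k * X ^ k) := by
      rw [← mul_pow]
      have : (B2 * X) ^ k ≤ (B * X) ^ k := by
        gcongr
        have : 0 < M * g := by positivity
        rw [hBdef]; linarith
      refine this.trans (le_mul_of_one_le_left (by positivity) (hG1 k))
    set Z := B ^ k * X ^ k with hZ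
    have hZ0 : 0 < Z := by positivity
    calc _ ≤ ‖fx j‖ + ‖∑ i ∈ Finset.range k, a i * x j ^ i‖ := norm_sub_le _ _
      _ ≤ L' * (S * (G k * Z) + Tl) + (A * G k) * Z := by
          refine add_le_add (h2.trans ?_) (h1.trans ?_)
          · gcongr
          · gcongr
      _ ≤ (L + A + L' * (S + 1)) * (G k * Z) + (L + A + L' * (S + 1)) * Tl := by
          have e1 : 0 < G k * Z := by positivity
          have q1 : 0 < L * (G k * Z) := by positivity
          have q2 : 0 < L' * (G k * Z) := by positivity
          have q3 : 0 ≤ L * Tl := by positivity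
          have q4 : 0 ≤ A * Tl := by positivity
          have q5 : 0 ≤ L' * S * Tl := by positivity
          nlinarith
      _ = _ := by rw [hZ]; ring

/-! ### assembling -/

theorem tail_hasSum {P r M z : ℝ} {m : ℝ} {X W : ℤ → ℝ} (hP : 1 < P) (hM : 0 < M) (hz : 0 < z)
    (hm : 0 < m) (hr : r = M * z / P) (hr2 : r ≤ 1 / 2)
    (hX : ∀ j, 0 < X j) (hW : ∀ j, 0 < W j)
    (hmom : ∀ i : ℕ, HasSum (fun j => X j ^ i * W j) (m * P ^ tri (i - 1) * z ^ i)) (k : ℕ) :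
    ∃ V, HasSum (fun j => (∑' n : ℕ, P ^ (-tri (n + k : ℕ)) * (M * X j) ^ (n + k)) * W j) V ∧
      V ≤ 2 * m * r ^ k := by
  have hP0 : 0 < P := by linarith
  have hr0 : 0 < r := by rw [hr]; positivity
  set h : ℕ × ℤ → ℝ := fun a => P ^ (-tri (a.1 + k : ℕ)) * (M * X a.2) ^ (a.1 + k) * W a.2 with hh
  have hnn : 0 ≤ h := fun a => by
    have := hX a.2
    have := hW a.2
    simp only [hh, Pi.zero_apply]; positivity
  have hrow : ∀ n : ℕ, HasSum (fun j => h (n, j)) (m * r ^ (n + k)) := by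
    intro n
    have := (hmom (n + k)).mul_left (P ^ (-tri (n + k : ℕ)) * M ^ (n + k))
    have e : P ^ (-tri (n + k : ℕ)) * M ^ (n + k) * (m * P ^ tri ((n + k : ℕ) - 1) * z ^ (n + k)) =
        m * r ^ (n + k) := by
      have e1 : P ^ tri (((n + k : ℕ):ℤ) - 1) = P ^ tri ((n + k : ℕ) : ℤ) / P ^ (n + k) := by
        rw [tri_pred, zpow_sub₀ hP0.ne', zpow_natCast]
      rw [e1, hr, div_pow, mul_pow, zpow_neg]
      field_simp
    rw [e] at this
    refine (hasSum_congr_aux fun j => ?_).mp this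
    simp only [hh]; rw [mul_pow]; ring
  have hg : HasSum (fun n : ℕ => m * r ^ (n + k)) (m * r ^ k * (1 - r)⁻¹) := by
    have := (hasSum_geometric_of_lt_one hr0.le (by linarith : r < 1)).mul_left (m * r ^ k)
    refine (hasSum_congr_aux fun n => ?_).mp this
    rw [pow_add]; ring
  have hsum : Summable h := by
    rw [summable_prod_of_nonneg hnn]
    refine ⟨fun n => (hrow n).summable, ?_⟩
    simp_rw [fun n => (hrow n).tsum_eq]
    exact hg.summable
  have htot : HasSum h (m * r ^ k * (1 - r)⁻¹) := by
    have h1 := hsum.hasSum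
    have h2 := h1.prod_fiberwise hrow
    rwa [h2.unique hg] at h1
  have hsw : HasSum (h ∘ (Equiv.prodComm ℤ ℕ)) (m * r ^ k * (1 - r)⁻¹) :=
    (Equiv.prodComm ℤ ℕ).hasSum_iff.mpr htot
  refine ⟨m * r ^ k * (1 - r)⁻¹, ?_, ?_⟩
  · refine hsw.prod_fiberwise fun j => ?_
    have hs : Summable (fun n : ℕ => P ^ (-tri (n + k : ℕ)) * (M * X j) ^ (n + k)) :=
      (summable_nat_add_iff k).2 (th_summable_nat hP (mul_pos hM (hX j)))
    exact hs.hasSum.mul_right (W j)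
  · have : (1 - r)⁻¹ ≤ 2 := by
      rw [inv_le_comm₀ (by linarith) (by norm_num)]; linarith
    calc m * r ^ k * (1 - r)⁻¹ ≤ m * r ^ k * 2 := by gcongr
      _ = _ := by ring

theorem assemble {p s lam : ℂ} {m : ℕ} (hm : 0 < m) (hs : s ^ m = p) (hp : 1 < ‖p‖)
    (hlam : lam ≠ 0) {fx : ℤ → ℂ} {a : ℕ → ℂ} {G : ℕ → ℝ} (hG1 : ∀ k, 1 ≤ G k) {C B M' : ℝ}
    (hC : 0 < C) (hB : 0 < B) (hM' : 0 < M')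
    (hpt : ∀ (k : ℕ) (j : ℤ),
      ‖fx j - ∑ i ∈ Finset.range k, a i * (s ^ j * lam) ^ i‖ ≤
        C * B ^ k * G k * ‖s ^ j * lam‖ ^ k +
        C * ∑' n : ℕ, ‖p‖ ^ (-tri (n + k : ℕ)) * (M' * ‖s ^ j * lam‖) ^ (n + k))
    {ε : ℝ} (hε : 0 < ε) :
    ∃ L > 0, ∃ M > 0, ∀ (k : ℕ) (z : ℂ), z ≠ 0 → ‖z‖ < ‖p‖ / (2 * M') →
      (∀ j : ℤ, ε * ‖s ^ j * lam‖ ≤ ‖z + s ^ j * lam‖) →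
      ‖(1 / (m : ℂ)) * (∑' j : ℤ, fx j / th p (p * s ^ j * lam / z)) -
        ∑ i ∈ Finset.range k, a i * p ^ tri (i - 1) * z ^ i‖
        < L * M ^ k * (G k * ‖p‖ ^ tri (k - 1)) * ‖z‖ ^ k := by
  have hp0 : p ≠ 0 := by rintro rfl; simp at hp; linarith
  have hP0 : 0 < ‖p‖ := by linarith
  have hs0 : s ≠ 0 := by
    rintro rfl
    rw [zero_pow hm.ne'] at hs
    exact hp0 hs.symm
  set ε' := ε / (1 + ε) with hε'
  have hε'0 : 0 < ε' := by positivity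
  obtain ⟨c, hc, hlow⟩ := th_lower hp hε'0
  refine ⟨4 * c⁻¹ * C, by positivity, B + M', by positivity, fun k z hz hzR hsep => ?_⟩
  have hz0 : 0 < ‖z‖ := norm_pos_iff.2 hz
  have hshift : ∀ (j n : ℤ), s ^ (j + m * n) = p ^ n * s ^ j := by
    intro j n
    rw [zpow_add₀ hs0, zpow_mul, zpow_natCast, hs]; ring
  set u := lam / z with hu
  have hu0 : u ≠ 0 := div_ne_zero hlam hz
  have hsep' : ∀ (j n : ℤ), ε' * ‖p‖ ^ n ≤ ‖s ^ j * u + p ^ n‖ := by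
    intro j n
    have h1 := hsep (j + m * (-n))
    rw [hshift] at h1
    set y := p ^ (-n) * s ^ j * lam with hy
    have e : s ^ j * u + p ^ n = p ^ n * ((z + y) / z) := by
      rw [hy, hu, zpow_neg]; field_simp; ring
    rw [e, norm_mul, norm_zpow, norm_div]
    have h2 : ε' ≤ ‖z + y‖ / ‖z‖ := by
      rw [hε', div_le_div_iff₀ (by positivity) hz0]
      have h3 : ‖z‖ ≤ ‖z + y‖ + ‖y‖ := by
        have := norm_sub_le (z + y) y
        simpa using this
      nlinarith
    have h4 : 0 < ‖p‖ ^ n := by positivity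
    nlinarith
  have hthne : ∀ j : ℤ, th p (s ^ j * u) ≠ 0 := by
    intro j
    refine th_ne_zero hp (by positivity) fun n h => ?_
    have := hsep' j n
    rw [h, norm_zero] at this
    have h3 : 0 < ε' * ‖p‖ ^ n := by positivity
    linarith
  have hmul : ∀ j : ℤ, p * (s ^ j * u) = s ^ (j + m * 1) * u := by
    intro j; rw [hshift, zpow_one]; ring
  -- complex moments
  have hcm : ∀ i : ℕ, HasSum (fun j : ℤ => (s ^ j * lam) ^ i / th p (p * (s ^ j * u)))
      (m * p ^ tri (i - 1) * z ^ i) := by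
    intro i
    have := (moment2 hp hm hs hu0 hthne i).mul_right (z ^ i)
    refine (hasSum_congr_aux fun j => ?_).mp this
    rw [div_mul_eq_mul_div, ← mul_pow, hu]
    congr 2
    field_simp
  -- real moments
  set W : ℤ → ℝ := fun j => (th ‖p‖ (‖p‖ * (‖s‖ ^ j * ‖u‖)))⁻¹ with hW
  have hu' : 0 < ‖u‖ := norm_pos_iff.2 hu0
  have hs' : 0 < ‖s‖ := norm_pos_iff.2 hs0
  have hW0 : ∀ j, 0 < W j := fun j => inv_pos.2 (th_pos hp (by positivity))
  have hrm : ∀ i : ℕ, HasSum (fun j : ℤ => ‖s ^ j * lam‖ ^ i * W j)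
      (m * ‖p‖ ^ tri (i - 1) * ‖z‖ ^ i) := by
    intro i
    have := (moment2 (p := ‖p‖) (s := ‖s‖) (u := ‖u‖) (by rwa [norm_norm]) hm (by rw [← norm_pow, hs])
      hu'.ne' (fun j => (th_pos hp (by positivity)).ne') i).mul_right (‖z‖ ^ i)
    refine (hasSum_congr_aux fun j => ?_).mp this
    rw [div_mul_eq_mul_div, ← mul_pow, hu, norm_div, norm_mul, norm_zpow, div_eq_mul_inv]
    simp only [hW]
    rw [hu, norm_div]
    congr 2
    field_simp
  set r := M' * ‖z‖ / ‖p‖ with hr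
  have hr2 : r ≤ 1 / 2 := by
    rw [lt_div_iff₀ (by positivity)] at hzR
    rw [hr, div_le_div_iff₀ hP0 (by norm_num)]
    linarith
  have hm' : (0:ℝ) < m := by exact_mod_cast hm
  obtain ⟨V, hV, hVle⟩ := tail_hasSum (X := fun j => ‖s ^ j * lam‖) hp hM' hz0 hm' hr hr2
    (fun j => norm_pos_iff.2 (by positivity)) hW0 hrm k
  -- remainder
  set E : ℤ → ℂ := fun j => (fx j - ∑ i ∈ Finset.range k, a i * (s ^ j * lam) ^ i) /
    th p (p * (s ^ j * u)) with hE
  have hbd : HasSum (fun j => c⁻¹ * ((C * B ^ k * G k) * (‖s ^ j * lam‖ ^ k * W j) + C *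
      ((∑' n : ℕ, ‖p‖ ^ (-tri (n + k : ℕ)) * (M' * ‖s ^ j * lam‖) ^ (n + k)) * W j)))
      (c⁻¹ * ((C * B ^ k * G k) * (m * ‖p‖ ^ tri (k - 1) * ‖z‖ ^ k) + C * V)) :=
    (((hrm k).mul_left _).add (hV.mul_left C)).mul_left _
  have hEle : ∀ j, ‖E j‖ ≤ c⁻¹ * ((C * B ^ k * G k) * (‖s ^ j * lam‖ ^ k * W j) + C *
      ((∑' n : ℕ, ‖p‖ ^ (-tri (n + k : ℕ)) * (M' * ‖s ^ j * lam‖) ^ (n + k)) * W j)) := by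
    intro j
    have h1 : c * (W j)⁻¹ ≤ ‖th p (p * (s ^ j * u))‖ := by
      have := hlow (p * (s ^ j * u)) (by positivity) (by rw [hmul]; exact hsep' _)
      simpa [hW, norm_mul, norm_zpow] using this
    have hcW : 0 < c * (W j)⁻¹ := mul_pos hc (inv_pos.2 (hW0 j))
    simp only [hE]
    rw [norm_div]
    calc _ ≤ _ / (c * (W j)⁻¹) := by
          exact div_le_div₀ ((norm_nonneg _).trans (hpt k j)) (hpt k j) hcW h1
      _ = _ := by
          have := hW0 j
          field_simp
  have hEs : Summable E := Summable.of_norm_bounded hbd.summable hEle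
  have hEn : ‖∑' j, E j‖ ≤ c⁻¹ * ((C * B ^ k * G k) * (m * ‖p‖ ^ tri (k - 1) * ‖z‖ ^ k) + C * V) :=
    tsum_of_norm_bounded hbd hEle
  have hfull : HasSum (fun j : ℤ => fx j / th p (p * s ^ j * lam / z))
      ((∑' j, E j) + ∑ i ∈ Finset.range k, a i * (m * p ^ tri (i - 1) * z ^ i)) := by
    have h1 := hasSum_sum (s := Finset.range k) (fun i _ => (hcm i).mul_left (a i))
    have h2 := hEs.hasSum.add h1
    refine (hasSum_congr_aux fun j => ?_).mp h2
    have e : p * s ^ j * lam / z = p * (s ^ j * u) := by rw [hu]; ring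
    simp only [hE]
    rw [e, sub_div, Finset.sum_div]
    simp only [mul_div_assoc]
    ring
  have hmc : (m:ℂ) ≠ 0 := by exact_mod_cast hm.ne'
  rw [hfull.tsum_eq]
  have e : (1 / (m:ℂ)) * ((∑' j, E j) + ∑ i ∈ Finset.range k, a i * (m * p ^ tri (i - 1) * z ^ i)) -
      ∑ i ∈ Finset.range k, a i * p ^ tri (i - 1) * z ^ i = (1 / (m:ℂ)) * ∑' j, E j := by
    rw [mul_add, Finset.mul_sum]
    have : ∑ i ∈ Finset.range k, 1 / (m:ℂ) * (a i * (m * p ^ tri (i - 1) * z ^ i)) =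
        ∑ i ∈ Finset.range k, a i * p ^ tri (i - 1) * z ^ i :=
      Finset.sum_congr rfl fun i _ => by field_simp
    rw [this]; ring
  rw [e, norm_mul, norm_div, norm_one, Complex.norm_natCast]
  have hPt : 1 ≤ ‖p‖ ^ tri ((k:ℤ) - 1) := one_le_zpow₀ hp.le (tri_nonneg _)
  set Pt := ‖p‖ ^ tri ((k:ℤ) - 1) with hPtd
  have hGk := hG1 k
  set D := G k * Pt with hD
  have hD1 : 1 ≤ D := one_le_mul_of_one_le_of_one_le hGk hPt
  have hrk : r ^ k ≤ (B + M') ^ k * D * ‖z‖ ^ k := by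
    have h1 : r ^ k ≤ ((B + M') * ‖z‖) ^ k := by
      have : r ≤ (B + M') * ‖z‖ := by
        rw [hr, div_le_iff₀ hP0]
        have : M' * ‖z‖ ≤ (B + M') * ‖z‖ := by gcongr; linarith
        have h0 : 0 < (B + M') * ‖z‖ := by positivity
        nlinarith
      gcongr
    rw [mul_pow] at h1
    have h0 : 0 < (B + M') ^ k * ‖z‖ ^ k := by positivity
    nlinarith
  have hBk : B ^ k ≤ (B + M') ^ k := by gcongr; linarith
  have hzk : 0 < ‖z‖ ^ k := by positivity
  have hfin : c⁻¹ * ((C * B ^ k * G k) * (m * Pt * ‖z‖ ^ k) + C * V) ≤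
      m * (3 * c⁻¹ * C * (B + M') ^ k * D * ‖z‖ ^ k) := by
    calc _ = c⁻¹ * (C * (m * (B ^ k * D * ‖z‖ ^ k)) + C * V) := by rw [hD]; ring
      _ ≤ c⁻¹ * (C * (m * ((B + M') ^ k * D * ‖z‖ ^ k)) +
          C * (2 * m * ((B + M') ^ k * D * ‖z‖ ^ k))) := by
          gcongr
          exact hVle.trans (by gcongr)
      _ = _ := by ring
  have hpos : 0 < c⁻¹ * C * (B + M') ^ k * D * ‖z‖ ^ k := by positivity
  calc 1 / (m:ℝ) * ‖∑' j, E j‖ ≤ 1 / (m:ℝ) * (m * (3 * c⁻¹ * C * (B + M') ^ k * D * ‖z‖ ^ k)) := by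
        gcongr
        exact hEn.trans hfin
    _ = 3 * (c⁻¹ * C * (B + M') ^ k * D * ‖z‖ ^ k) := by field_simp
    _ < 4 * (c⁻¹ * C * (B + M') ^ k * D * ‖z‖ ^ k) := by linarith
    _ = _ := by ring

/-! ### rational powers -/

theorem qpow_add (q : ℂ) (α β : ℚ) : qpow q (α + β) = qpow q α * qpow q β := by
  unfold qpow
  rw [← Complex.exp_add]
  congr 1; push_cast; ring

theorem qpow_zpow (q : ℂ) (α : ℚ) (n : ℤ) : qpow q α ^ n = qpow q (n * α) := by
  unfold qpow
  rw [← Complex.exp_int_mul]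
  congr 1; push_cast; ring

theorem norm_qpow {q : ℂ} (hq : q ≠ 0) (α : ℚ) : ‖qpow q α‖ = ‖q‖ ^ (α : ℝ) := by
  unfold qpow
  rw [Complex.norm_exp, Real.rpow_def_of_pos (norm_pos_iff.2 hq)]
  congr 1
  have : ((α : ℂ) * Complex.log q).re = (α : ℝ) * (Complex.log q).re := by
    rw [← Complex.ofReal_ratCast, Complex.re_ofReal_mul]
  rw [this, Complex.log_re, mul_comm]

theorem zpow_add_one_norm {t : ℂ} (ht : 1 < ‖t‖) (n : ℤ) : 1 - ‖t‖⁻¹ ≤ ‖t ^ n + 1‖ := by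
  have hi : 0 < ‖t‖⁻¹ := by positivity
  have h2 : ‖t‖⁻¹ < 1 := inv_lt_one_of_one_lt₀ ht
  have h3 : ‖t‖ * ‖t‖⁻¹ = 1 := mul_inv_cancel₀ (by positivity)
  rcases lt_trichotomy n 0 with h | h | h
  · have h1 : ‖t‖ ^ n ≤ ‖t‖ ^ (-1:ℤ) := zpow_le_zpow_right₀ ht.le (by omega)
    rw [zpow_neg_one] at h1
    have := norm_sub_le (t ^ n + 1) (t ^ n)
    rw [add_sub_cancel_left, norm_one, norm_zpow] at this
    linarith
  · subst h
    rw [zpow_zero, show (1:ℂ) + 1 = 2 by norm_num]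
    simp only [Complex.norm_ofNat]
    linarith
  · have h1 : ‖t‖ ^ (1:ℤ) ≤ ‖t‖ ^ n := zpow_le_zpow_right₀ ht.le (by omega)
    rw [zpow_one] at h1
    have := norm_sub_le (t ^ n + 1) 1
    rw [add_sub_cancel_right, norm_one, norm_zpow] at this
    nlinarith

end Helpers

/-- if `f ∼^{[λ]}_{μ,K} f̂` and `f ∈ ℍ^{[λ]}_{μ₁,K₁}` with `K₁ ∣ K`, then
`L^{[λ]}_{μ₁,K₁}(f) ∼^{[λ]}_{μ₂,K₁} L̂_{μ₁}(f̂)` where `μ₂⁻¹ = μ⁻¹ + μ₁⁻¹` and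
`L̂_{μ₁}` is the formal `q`-Laplace transform `∑ aₗ ζˡ ↦ ∑ aₗ q^{ℓ(ℓ-1)/(2μ₁)} zˡ`. -/
theorem qLaplace_asymptotic (q : ℂ) (hq : 1 < ‖q‖) (μ : ℚ) (hμ : 0 < μ)
    (K : ℕ) (hK : 0 < K) (hKμ : ∃ m : ℕ, 0 < m ∧ (K : ℚ) = μ * m)
    (μ₁ : ℚ) (hμ₁ : 0 < μ₁) (K₁ : ℕ) (hK₁ : 0 < K₁)
    (hK₁μ₁ : ∃ m : ℕ, 0 < m ∧ (K₁ : ℚ) = μ₁ * m) (hdvd : K₁ ∣ K)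
    (lam : ℂ) (hlam : lam ≠ 0) (f : ℂ → ℂ) (a : ℕ → ℂ)
    (hasym : qAsymptotic q μ K lam f a) (hf : memH q μ₁ K₁ lam f)
    (μ₂ : ℚ) (hμ₂ : μ₂⁻¹ = μ⁻¹ + μ₁⁻¹) :
    qAsymptotic q μ₂ K₁ lam (qLaplace q μ₁ K₁ lam f)
      (fun n : ℕ => a n * qpow q ((n * (n - 1) : ℚ) / (2 * μ₁))) := by
  
  obtain ⟨m, hm, hmK⟩ := hK₁μ₁
  obtain ⟨d, rfl⟩ := hdvd
  have hd : 0 < d := Nat.pos_of_mul_pos_left hK |> fun h => by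
    rcases Nat.eq_zero_or_pos d with h | h
    · subst h; simp at hK
    · exact h
  have hq0 : q ≠ 0 := by rintro rfl; simp at hq; linarith
  have hQ0 : 0 < ‖q‖ := by linarith
  set s := qpow q (1 / K₁) with hs
  set p := qpow q (1 / μ₁) with hp
  set t := qpow q (1 / ((K₁ * d : ℕ) : ℚ)) with ht
  have hK₁' : (K₁:ℚ) ≠ 0 := by exact_mod_cast hK₁.ne'
  have hd' : (d:ℚ) ≠ 0 := by exact_mod_cast hd.ne'
  have hm' : (m:ℚ) ≠ 0 := by exact_mod_cast hm.ne'
  have hsj : ∀ j : ℤ, qpow q ((j:ℚ) / K₁) = s ^ j := by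
    intro j; rw [hs, qpow_zpow]; congr 1; ring
  have htj : ∀ j : ℤ, qpow q ((j:ℚ) / ((K₁ * d : ℕ) : ℚ)) = t ^ j := by
    intro j; rw [ht, qpow_zpow]; congr 1; ring
  have hst : s = t ^ (d:ℤ) := by
    rw [hs, ht, qpow_zpow]; congr 1; push_cast; field_simp
  have hsp : s ^ m = p := by
    rw [← zpow_natCast, hs, hp, qpow_zpow]; congr 1; push_cast; rw [hmK]; field_simp
  have hps : ∀ j : ℤ, qpow q (1 / μ₁ + (j:ℚ) / K₁) = p * s ^ j := by
    intro j; rw [qpow_add, hsj]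
  have hnt : 1 < ‖t‖ := by
    rw [ht, norm_qpow hq0]
    exact Real.one_lt_rpow hq (by
      have : (0:ℚ) < 1 / ((K₁ * d : ℕ) : ℚ) := by positivity
      exact_mod_cast this)
  have hns : 1 < ‖s‖ := by
    rw [hs, norm_qpow hq0]
    exact Real.one_lt_rpow hq (by
      have : (0:ℚ) < 1 / (K₁ : ℚ) := by positivity
      exact_mod_cast this)
  have hnp : 1 < ‖p‖ := by
    rw [hp, norm_qpow hq0]
    exact Real.one_lt_rpow hq (by
      have : (0:ℚ) < 1 / μ₁ := by positivity
      exact_mod_cast this)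
  have hpP : qpowR ‖q‖ (1 / μ₁) = ‖p‖ := by rw [hp, norm_qpow hq0]; rfl
  have ht0 : t ≠ 0 := by intro h; rw [h, norm_zero] at hnt; linarith
  have hs0 : s ≠ 0 := by intro h; rw [h, norm_zero] at hns; linarith
  -- the Gevrey weights
  set G : ℕ → ℝ := fun k => ‖q‖ ^ (((k * (k - 1) : ℚ) / (2 * μ) : ℚ) : ℝ) with hGdef
  set g : ℝ := ‖q‖ ^ ((1 / μ : ℚ) : ℝ) with hgdef
  have hg : 1 ≤ g := Real.one_le_rpow hq.le (by
    have : (0:ℚ) ≤ 1 / μ := by positivity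
    exact_mod_cast this)
  have hG0 : G 0 = 1 := by simp [hGdef]
  have hGs : ∀ k, G (k + 1) = G k * g ^ k := by
    intro k
    simp only [hGdef, hgdef]
    rw [← Real.rpow_mul_natCast hQ0.le, ← Real.rpow_add hQ0]
    congr 1
    push_cast
    have : (μ:ℝ) ≠ 0 := by exact_mod_cast hμ.ne'
    field_simp
    ring
  -- use the hypotheses
  obtain ⟨ε₀, hε₀, R₀, hR₀, has⟩ := hasym
  obtain ⟨-, ε₁, hε₁, Ω, -, -, hΩ, -, L', hL', M', hM', hgrow⟩ := hf
  set δ := 1 - ‖t‖⁻¹ with hδ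
  have hδ0 : 0 < δ := by
    have := inv_lt_one_of_one_lt₀ hnt
    rw [hδ]; linarith
  have hmin : 0 < min ε₀ δ := lt_min hε₀ hδ0
  obtain ⟨L, hL, M, hM, hLM⟩ := has (min ε₀ δ / 2) (by positivity)
    (by linarith [min_le_left ε₀ δ]) (R₀ / 2) (by positivity) (by linarith)
  have hx0 : ∀ j : ℤ, s ^ j * lam ≠ 0 := fun j => by positivity
  obtain ⟨C, hC, B, hB, hpt⟩ := pointwise (x := fun j => s ^ j * lam)
    (fx := fun j => f (s ^ j * lam)) (a := a) (G := G) (g := g) (L := L) (M := M) (R := R₀ / 2)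
    (L' := L') (M' := M') (P := ‖p‖) hg hG0 hGs hL hM (by positivity) hL' hM' hnp hx0
    (by
      have hl : 0 < ‖lam‖ := norm_pos_iff.2 hlam
      obtain ⟨n, hn⟩ := exists_pow_lt_of_lt_one (show 0 < R₀ / 2 / ‖lam‖ by positivity)
        (inv_lt_one_of_one_lt₀ hns)
      refine ⟨-(n:ℤ), ?_⟩
      rw [norm_mul, norm_zpow, zpow_neg, zpow_natCast, ← inv_pow]
      rwa [lt_div_iff₀ hl] at hn)
    (by
      intro k j hj
      refine (hLM k (s ^ j * lam) (hx0 j) hj fun i => ?_).le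
      rw [htj, hst, ← zpow_mul]
      have e : t ^ ((d:ℤ) * j) * lam + t ^ i * lam = (t ^ i * lam) * (t ^ ((d:ℤ) * j - i) + 1) := by
        rw [zpow_sub₀ ht0]; field_simp
      rw [e, norm_mul _ (t ^ _ + 1), mul_comm]
      refine mul_le_mul_of_nonneg_left ?_ (norm_nonneg _)
      have := zpow_add_one_norm hnt ((d:ℤ) * j - i)
      linarith [min_le_right ε₀ δ])
    (by
      intro j
      have hmem : s ^ j * lam ∈ Ω := by
        apply hΩ
        refine ⟨hx0 j, j, ?_⟩
        rw [hsj, sub_self, norm_zero]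
        have := norm_pos_iff.2 (hx0 j)
        positivity
      have := (hgrow _ hmem).le
      rw [hpP] at this
      exact this)
  refine ⟨1, one_pos, ‖p‖ / (2 * M'), by positivity, fun ε hε _ R hR hRR => ?_⟩
  obtain ⟨L2, hL2, M2, hM2, hfin⟩ := assemble hm hsp hnp hlam (G_ge_one hg hG0 hGs) hC hB hM' hpt hε
  refine ⟨L2, hL2, M2, hM2, fun k z hz hzR hsep => ?_⟩
  have hmain := hfin k z hz (hzR.trans hRR) (by simpa only [hsj] using hsep)
  have eL : qLaplace q μ₁ K₁ lam f z =
      (1 / (m : ℂ)) * (∑' j : ℤ, f (s ^ j * lam) / th p (p * s ^ j * lam / z)) := by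
    unfold qLaplace
    have e1 : (μ₁ : ℂ) / (K₁ : ℂ) = 1 / (m:ℂ) := by
      have h1 : μ₁ / (K₁:ℚ) = 1 / (m:ℚ) := by rw [hmK]; field_simp
      have h2 := congrArg (fun r : ℚ => (r : ℂ)) h1
      push_cast at h2
      exact h2
    rw [e1]
    congr 1
    refine tsum_congr fun j => ?_
    rw [hsj, hps]
    rfl
  have ecast : ∀ i : ℕ, ((tri ((i:ℤ) - 1) : ℤ) : ℚ) = (i * (i - 1) : ℚ) / 2 := by
    intro i
    have := two_tri ((i:ℤ) - 1)
    have h2 : (2:ℚ) * (tri ((i:ℤ) - 1) : ℤ) = ((i:ℚ) - 1) * ((i:ℚ) - 1 + 1) := by exact_mod_cast this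
    linarith
  have eq1 : ∀ i : ℕ, qpow q ((i * (i - 1) : ℚ) / (2 * μ₁)) = p ^ tri ((i:ℤ) - 1) := by
    intro i
    rw [hp, qpow_zpow, ecast]
    congr 1
    field_simp
  have eG : ‖q‖ ^ (((k * (k - 1) : ℚ) / (2 * μ₂) : ℚ) : ℝ) = G k * ‖p‖ ^ tri ((k:ℤ) - 1) := by
    rw [← norm_zpow, ← eq1, norm_qpow hq0]
    simp only [hGdef]
    rw [← Real.rpow_add hQ0]
    congr 1
    rw [← Rat.cast_add]
    congr 1
    have e1 : (k * (k - 1) : ℚ) / (2 * μ₂) = (k * (k - 1) : ℚ) / 2 * μ₂⁻¹ := by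
      rw [div_mul_eq_div_div, div_eq_mul_inv _ μ₂]
    rw [e1, hμ₂, mul_add]
    congr 1 <;> field_simp
  simp only [eq1]
  rw [eL, eG]
  exact hmain
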